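/- Let G be a countable infinite discrete group such that for every standard probability space (X₀, μ₀) the Bernoulli shift G ↷ (X₀^G, μ₀^G) is 𝕋-cocycle superrigid (G ∈ 𝒢). Consider the Bernoulli shift G ↷ (𝕋^G, ν^G), where ν is the Haar measure on 𝕋. If the natural map Ψ₁ : H¹(G, 𝕋) → H¹(G ↷ 𝕋^G; 𝕋) is surjective (i.e., H¹(G ↷ 𝕋^G; 𝕋) = H¹(G, 𝕋)), then H¹(G, ℤG) = 0. -/

import Mathlib

open MeasureTheory

noncomputable section

namespace AlgActCohomology

/-- The Borel σ-algebra on the circle group `𝕋 = {z ∈ ℂ : |z| = 1}`. -/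
noncomputable instance : MeasurableSpace Circle := borel Circle
instance : BorelSpace Circle := ⟨rfl⟩

variable {G X : Type*}

/-- The diagonal action on a product. -/
def diag (a : G → X → X) : G → X × X → X × X := fun g p => (a g p.1, a g p.2)

/-- An action is ergodic if every measurable set invariant under every group element
has measure 0 or 1. -/
def IsErgodicAction [MeasurableSpace X] (a : G → X → X) (μ : Measure X) : Prop :=
  ∀ s : Set X, MeasurableSet s → (∀ g : G, a g ⁻¹' s = s) → μ s = 0 ∨ μ s = 1

/-- An action is weakly mixing if the diagonal action on the square
(with the product measure) is ergodic. -/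
def IsWeaklyMixing [MeasurableSpace X] (a : G → X → X) (μ : Measure X) : Prop :=
  IsErgodicAction (diag a) (μ.prod μ)

/-- A (p.m.p.) group action: `a : G → X → X` is an action of `G` and every `a g`
is measure preserving. -/
structure IsPmpAction [Group G] [MeasurableSpace X] (a : G → X → X) (μ : Measure X) :
    Prop where
  act_one : ∀ x, a 1 x = x
  act_mul : ∀ g h x, a (g * h) x = a g (a h x)
  measurePreserving : ∀ g, MeasurePreserving (a g) μ μ

/-- An algebraic action: an action of `G` by continuous (automatically bijective)
additive automorphisms of a compact abelian group `X`. -/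
structure IsAlgebraicAction [Group G] [AddCommGroup X] [TopologicalSpace X]
    (a : G → X → X) : Prop where
  act_one : ∀ x, a 1 x = x
  act_mul : ∀ g h x, a (g * h) x = a g (a h x)
  continuous : ∀ g, Continuous (a g)
  act_add : ∀ g x y, a g (x + y) = a g x + a g y

/-- A measurable `𝕋`-valued 1-cocycle for an action. -/
def IsCocycle1 [Group G] [MeasurableSpace X] (a : G → X → X) (μ : Measure X)
    (c : G → X → Circle) : Prop :=
  (∀ g, Measurable (c g)) ∧ ∀ g h : G, ∀ᵐ x ∂μ, c (g * h) x = c g x * c h (a g⁻¹ x)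

/-- An action is `𝕋`-cocycle superrigid if every measurable `𝕋`-valued 1-cocycle is
cohomologous to a group homomorphism `G → 𝕋`. -/
def IsCocycleSuperrigid [Group G] [MeasurableSpace X] (a : G → X → X) (μ : Measure X) :
    Prop :=
  ∀ c : G → X → Circle, IsCocycle1 a μ c →
    ∃ (lam : G →* Circle) (b : X → Circle), Measurable b ∧
      ∀ g : G, ∀ᵐ x ∂μ, c g x = lam g * (b (a g⁻¹ x) * (b x)⁻¹)

section Char

variable (X) [AddCommGroup X] [TopologicalSpace X]

/-- The Pontryagin dual `X̂` of a compact abelian group `X`: the group of continuous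
characters `X → 𝕋`, as a subgroup of the group of all functions `X → 𝕋`. -/
def charGroup : Subgroup (X → Circle) where
  carrier := {χ | Continuous χ ∧ ∀ x y, χ (x + y) = χ x * χ y}
  one_mem' := ⟨continuous_const, fun _ _ => (one_mul 1).symm⟩
  mul_mem' := fun h1 h2 => ⟨h1.1.mul h2.1, fun x y => by
    simp only [Pi.mul_apply, h1.2 x y, h2.2 x y]; exact mul_mul_mul_comm _ _ _ _⟩
  inv_mem' := fun h => ⟨h.1.inv, fun x y => by
    simp only [Pi.inv_apply, h.2 x y, mul_inv]⟩

end Char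

section Degree1

variable [Group G] [AddCommGroup X] [TopologicalSpace X]

/-- `Z¹(G, X̂)`: 1-cocycles of `G` with coefficients in the dual module `X̂`,
where `(g • χ) x = χ (a g⁻¹ x)`. -/
def modZ1 (a : G → X → X) : Subgroup (G → charGroup X) where
  carrier := {c | ∀ (g h : G) (x : X),
    ((c (g * h) : X → Circle)) x = (c h : X → Circle) (a g⁻¹ x) * (c g : X → Circle) x}
  one_mem' := by
    intro g h x
    simp
  mul_mem' := by
    intro c₁ c₂ h1 h2 g h x
    simp only [Pi.mul_apply, Subgroup.coe_mul]
    rw [h1 g h x, h2 g h x]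
    ac_rfl
  inv_mem' := by
    intro c hc g h x
    simp only [Pi.inv_apply, InvMemClass.coe_inv]
    rw [hc g h x, mul_inv]

/-- `B¹(G, X̂)`: 1-coboundaries. -/
def modB1 (a : G → X → X) : Subgroup (G → charGroup X) where
  carrier := {c | ∃ χ : charGroup X, ∀ (g : G) (x : X),
    (c g : X → Circle) x = (χ : X → Circle) (a g⁻¹ x) * ((χ : X → Circle) x)⁻¹}
  one_mem' := ⟨1, by intro g x; simp⟩
  mul_mem' := by
    rintro c₁ c₂ ⟨χ₁, h1⟩ ⟨χ₂, h2⟩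
    refine ⟨χ₁ * χ₂, fun g x => ?_⟩
    simp only [Pi.mul_apply, Subgroup.coe_mul]
    rw [h1 g x, h2 g x, mul_inv]
    ac_rfl
  inv_mem' := by
    rintro c ⟨χ, h⟩
    refine ⟨χ⁻¹, fun g x => ?_⟩
    simp only [Pi.inv_apply, InvMemClass.coe_inv]
    rw [h g x, mul_inv, inv_inv]

variable [MeasurableSpace X]

/-- Measurable `𝕋`-valued 1-cocycles for an action, as a subgroup of all maps
`G → X → 𝕋`. -/
def measZ1 (a : G → X → X) (μ : Measure X) : Subgroup (G → X → Circle) where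
  carrier := {c | (∀ g, Measurable (c g)) ∧
    ∀ g h : G, ∀ᵐ x ∂μ, c (g * h) x = c g x * c h (a g⁻¹ x)}
  one_mem' := ⟨fun _ => measurable_const, fun g h => ae_of_all _ fun x => by simp⟩
  mul_mem' := by
    rintro c₁ c₂ ⟨m1, h1⟩ ⟨m2, h2⟩
    refine ⟨fun g => (m1 g).mul (m2 g), fun g h => ?_⟩
    filter_upwards [h1 g h, h2 g h] with x e1 e2
    simp only [Pi.mul_apply]
    rw [e1, e2]
    ac_rfl
  inv_mem' := by
    rintro c ⟨m, hc⟩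
    refine ⟨fun g => (m g).inv, fun g h => ?_⟩
    filter_upwards [hc g h] with x e
    simp only [Pi.inv_apply]
    rw [e, mul_inv]

/-- The subgroup of measurable 1-cocycles that are cohomologous to (the cocycle
induced by) a group homomorphism `G → 𝕋`; this is the preimage in `Z¹(G ↷ X; 𝕋)` of
the subgroup `Ψ₁(H¹(G, 𝕋))` of `H¹(G ↷ X; 𝕋)`, so that
`H¹(G ↷ X; 𝕋)/Ψ₁(H¹(G, 𝕋)) = measZ1 ⧸ measBPsi1`. -/
def measBPsi1 (a : G → X → X) (μ : Measure X) : Subgroup (G → X → Circle) where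
  carrier := {c | ∃ (φ : G →* Circle) (b : X → Circle), Measurable b ∧
    ∀ g : G, ∀ᵐ x ∂μ, c g x = φ g * (b (a g⁻¹ x) * (b x)⁻¹)}
  one_mem' := ⟨1, 1, measurable_const, fun g => ae_of_all _ fun x => by simp⟩
  mul_mem' := by
    rintro c₁ c₂ ⟨φ₁, b₁, hb₁, h1⟩ ⟨φ₂, b₂, hb₂, h2⟩
    refine ⟨φ₁ * φ₂, b₁ * b₂, hb₁.mul hb₂, fun g => ?_⟩
    filter_upwards [h1 g, h2 g] with x e1 e2
    simp only [Pi.mul_apply, MonoidHom.mul_apply]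
    rw [e1, e2, mul_inv]
    ac_rfl
  inv_mem' := by
    rintro c ⟨φ, b, hb, h⟩
    refine ⟨φ⁻¹, b⁻¹, hb.inv, fun g => ?_⟩
    filter_upwards [h g] with x e
    simp only [Pi.inv_apply, MonoidHom.inv_apply]
    rw [e, mul_inv, mul_inv, inv_inv]

/-- The measurable cocycle induced by a module cocycle: evaluation of characters. -/
def ind1 (c : G → charGroup X) : G → X → Circle := fun g => (c g : X → Circle)

end Degree1

section Degree2

variable [Group G]

/-- A `𝕋`-valued 2-cocycle of the group `G` (for the trivial `G`-module `𝕋`). -/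
def IsGrpCocycle2 (θ : G → G → Circle) : Prop :=
  ∀ g₁ g₂ g₃ : G, θ g₂ g₃ * (θ (g₁ * g₂) g₃)⁻¹ * θ g₁ (g₂ * g₃) * (θ g₁ g₂)⁻¹ = 1

private lemma mul4 {M : Type*} [CommGroup M] {a₁ b₁ c₁ d₁ a₂ b₂ c₂ d₂ : M}
    (h₁ : a₁ * b₁⁻¹ * c₁ * d₁⁻¹ = 1) (h₂ : a₂ * b₂⁻¹ * c₂ * d₂⁻¹ = 1) :
    (a₁ * a₂) * (b₁ * b₂)⁻¹ * (c₁ * c₂) * (d₁ * d₂)⁻¹ = 1 := by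
  have e : (a₁ * a₂) * (b₁ * b₂)⁻¹ * (c₁ * c₂) * (d₁ * d₂)⁻¹
      = (a₁ * b₁⁻¹ * c₁ * d₁⁻¹) * (a₂ * b₂⁻¹ * c₂ * d₂⁻¹) := by
    simp only [mul_inv]; ac_rfl
  rw [e, h₁, h₂, one_mul]

private lemma inv4 {M : Type*} [CommGroup M] {a b c d : M}
    (h : a * b⁻¹ * c * d⁻¹ = 1) : a⁻¹ * b * c⁻¹ * d = 1 := by
  have e : a⁻¹ * b * c⁻¹ * d = (a * b⁻¹ * c * d⁻¹)⁻¹ := by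
    simp only [mul_inv, inv_inv]; try ac_rfl
  rw [e, h, inv_one]

variable [AddCommGroup X] [TopologicalSpace X]

/-- `Z²(G, X̂)`: 2-cocycles of `G` with coefficients in the dual module `X̂`. -/
def modZ2 (a : G → X → X) : Subgroup (G → G → charGroup X) where
  carrier := {c | ∀ (g₁ g₂ g₃ : G) (x : X),
    (c g₂ g₃ : X → Circle) (a g₁⁻¹ x) * ((c (g₁ * g₂) g₃ : X → Circle) x)⁻¹ *
      (c g₁ (g₂ * g₃) : X → Circle) x * ((c g₁ g₂ : X → Circle) x)⁻¹ = 1}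
  one_mem' := by intro g₁ g₂ g₃ x; simp
  mul_mem' := by
    intro c₁ c₂ h1 h2 g₁ g₂ g₃ x
    simp only [Pi.mul_apply, Subgroup.coe_mul]
    exact mul4 (h1 g₁ g₂ g₃ x) (h2 g₁ g₂ g₃ x)
  inv_mem' := by
    intro c hc g₁ g₂ g₃ x
    simp only [Pi.inv_apply, InvMemClass.coe_inv, inv_inv]
    exact inv4 (hc g₁ g₂ g₃ x)

/-- `B²(G, X̂)`: 2-coboundaries. -/
def modB2 (a : G → X → X) : Subgroup (G → G → charGroup X) where
  carrier := {c | ∃ b : G → charGroup X, ∀ (g h : G) (x : X),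
    (c g h : X → Circle) x =
      (b h : X → Circle) (a g⁻¹ x) * ((b (g * h) : X → Circle) x)⁻¹ * (b g : X → Circle) x}
  one_mem' := ⟨1, by intro g h x; simp⟩
  mul_mem' := by
    rintro c₁ c₂ ⟨b₁, h1⟩ ⟨b₂, h2⟩
    refine ⟨b₁ * b₂, fun g h x => ?_⟩
    simp only [Pi.mul_apply, Subgroup.coe_mul]
    rw [h1 g h x, h2 g h x, mul_inv]
    try ac_rfl
  inv_mem' := by
    rintro c ⟨b, hb⟩
    refine ⟨b⁻¹, fun g h x => ?_⟩
    simp only [Pi.inv_apply, InvMemClass.coe_inv]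
    rw [hb g h x]
    simp only [mul_inv, inv_inv]
    try ac_rfl

variable [MeasurableSpace X]

/-- Measurable `𝕋`-valued 2-cocycles for an action. -/
def measZ2 (a : G → X → X) (μ : Measure X) : Subgroup (G → G → X → Circle) where
  carrier := {c | (∀ g h, Measurable (c g h)) ∧
    ∀ g₁ g₂ g₃ : G, ∀ᵐ x ∂μ,
      c g₂ g₃ (a g₁⁻¹ x) * (c (g₁ * g₂) g₃ x)⁻¹ * c g₁ (g₂ * g₃) x * (c g₁ g₂ x)⁻¹ = 1}
  one_mem' := ⟨fun _ _ => measurable_const, fun g₁ g₂ g₃ => ae_of_all _ fun x => by simp⟩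
  mul_mem' := by
    rintro c₁ c₂ ⟨m1, h1⟩ ⟨m2, h2⟩
    refine ⟨fun g h => (m1 g h).mul (m2 g h), fun g₁ g₂ g₃ => ?_⟩
    filter_upwards [h1 g₁ g₂ g₃, h2 g₁ g₂ g₃] with x e1 e2
    simp only [Pi.mul_apply]
    exact mul4 e1 e2
  inv_mem' := by
    rintro c ⟨m, hc⟩
    refine ⟨fun g h => (m g h).inv, fun g₁ g₂ g₃ => ?_⟩
    filter_upwards [hc g₁ g₂ g₃] with x e
    simp only [Pi.inv_apply, inv_inv]
    exact inv4 e

/-- The subgroup of measurable 2-cocycles that are cohomologous to a constant (in the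
space variable) 2-cocycle coming from a group 2-cocycle `θ : G² → 𝕋`; this is the
preimage in `Z²(G ↷ X; 𝕋)` of the subgroup `Ψ₂(H²(G, 𝕋))` of `H²(G ↷ X; 𝕋)`, so that
`H²(G ↷ X; 𝕋)/Ψ₂(H²(G, 𝕋)) = measZ2 ⧸ measBPsi2`. -/
def measBPsi2 (a : G → X → X) (μ : Measure X) : Subgroup (G → G → X → Circle) where
  carrier := {c | ∃ (θ : G → G → Circle) (b : G → X → Circle), IsGrpCocycle2 θ ∧
    (∀ g, Measurable (b g)) ∧
    ∀ g h : G, ∀ᵐ x ∂μ, c g h x = θ g h * (b h (a g⁻¹ x) * (b (g * h) x)⁻¹ * b g x)}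
  one_mem' := ⟨fun _ _ => 1, fun _ => 1, fun g₁ g₂ g₃ => by simp, fun _ => measurable_const,
    fun g h => ae_of_all _ fun x => by simp⟩
  mul_mem' := by
    rintro c₁ c₂ ⟨θ₁, b₁, hθ₁, hb₁, h1⟩ ⟨θ₂, b₂, hθ₂, hb₂, h2⟩
    refine ⟨fun g h => θ₁ g h * θ₂ g h, fun g => b₁ g * b₂ g,
      fun g₁ g₂ g₃ => mul4 (hθ₁ g₁ g₂ g₃) (hθ₂ g₁ g₂ g₃),
      fun g => (hb₁ g).mul (hb₂ g), fun g h => ?_⟩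
    filter_upwards [h1 g h, h2 g h] with x e1 e2
    simp only [Pi.mul_apply]
    rw [e1, e2]
    simp only [mul_inv]
    ac_rfl
  inv_mem' := by
    rintro c ⟨θ, b, hθ, hb, hc⟩
    refine ⟨fun g h => (θ g h)⁻¹, fun g => (b g)⁻¹,
      fun g₁ g₂ g₃ => by simpa only [inv_inv] using inv4 (hθ g₁ g₂ g₃),
      fun g => (hb g).inv, fun g h => ?_⟩
    filter_upwards [hc g h] with x e
    simp only [Pi.inv_apply]
    rw [e]
    simp only [mul_inv, inv_inv]
    try ac_rfl

/-- The measurable 2-cocycle induced by a module 2-cocycle: evaluation of characters. -/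
def ind2 (c : G → G → charGroup X) : G → G → X → Circle := fun g h => (c g h : X → Circle)

end Degree2


section Bernoulli

/-- The Bernoulli shift action `G ↷ X₀^G`, `(g • x) h = x (g⁻¹ h)`. -/
def bernoulliShift (G X₀ : Type*) [Group G] : G → (G → X₀) → (G → X₀) :=
  fun g x h => x (g⁻¹ * h)

/-- `μ` is the product along `ι` of copies of `μ₀`: it gives every finite-dimensional
cylinder set its product measure.  (This characterizes the Bernoulli product measure
`μ₀^ι` uniquely.) -/
def IsBernoulliMeasure {ι X₀ : Type*} [MeasurableSpace X₀] (μ₀ : Measure X₀)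
    (μ : Measure (ι → X₀)) : Prop :=
  ∀ (s : Finset ι) (t : ι → Set X₀), (∀ i, MeasurableSet (t i)) →
    μ {x | ∀ i ∈ s, x i ∈ t i} = ∏ i ∈ s, μ₀ (t i)

/-- The class `𝒢` of countable groups `G` such that for every standard probability
space `(X₀, μ₀)` the Bernoulli shift `G ↷ (X₀^G, μ₀^G)` is `𝕋`-cocycle superrigid. -/
def InClassG (G : Type*) [Group G] : Prop :=
  ∀ (X₀ : Type) [MeasurableSpace X₀] [StandardBorelSpace X₀]
    (μ₀ : Measure X₀) [IsProbabilityMeasure μ₀]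
    (μ : Measure (G → X₀)) [IsProbabilityMeasure μ],
    IsBernoulliMeasure μ₀ μ → IsCocycleSuperrigid (bernoulliShift G X₀) μ

end Bernoulli


section Proof

lemma circle_cont : Continuous (fun z : Circle => (z : ℂ)) := by fun_prop

/-- Left translation on finitely supported functions. -/
def act {G : Type} [Group G] (g : G) (m : G →₀ ℤ) : G →₀ ℤ :=
  Finsupp.equivMapDomain (Equiv.mulLeft g) m

lemma act_apply {G : Type} [Group G] (g : G) (m : G →₀ ℤ) (k : G) :
    act g m k = m (g⁻¹ * k) := by
  simp [act, Finsupp.equivMapDomain_apply]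

/-- A cocycle with finite range in `ℤG`, `G` infinite, vanishes. -/
lemma cocycle_eq_zero_of_finite_range {G : Type} [Group G] [Infinite G] (c : G → G →₀ ℤ)
    (hc : ∀ g h k, c (g * h) k = c h (g⁻¹ * k) + c g k)
    (hfin : (Set.range c).Finite) (h : G) : c h = 0 := by
  by_contra hne
  obtain ⟨k, hk⟩ : ∃ k, c h k ≠ 0 := by
    by_contra! H
    exact hne (Finsupp.ext H)
  have hS : (⋃ m ∈ Set.range c, {x | m x ≠ 0}).Finite := by
    refine hfin.biUnion fun m _ => ?_
    exact (m.hasFiniteSupport)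
  have : (Set.univ : Set G).Finite := by
    refine (Set.Finite.preimage (f := fun g : G => g * k)
      (fun a _ b _ hab => mul_right_cancel hab) hS).subset ?_
    intro g _
    simp only [Set.mem_preimage, Set.mem_iUnion, Set.mem_range, Set.mem_ofPred_eq]
    by_contra! H
    have h1 := H _ ⟨g * h, rfl⟩
    have h2 := H _ ⟨g, rfl⟩
    rw [hc, h2, add_zero, inv_mul_cancel_left] at h1
    exact hk h1
  exact Set.infinite_univ this

lemma coboundary_of_finite {G : Type} [Group G] [Infinite G] (c : G → G →₀ ℤ)
    (hc : ∀ g h k, c (g * h) k = c h (g⁻¹ * k) + c g k) (m : G →₀ ℤ)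
    (hfin : (Set.range fun g => act g m - c g).Finite) (g : G) : c g = act g m - m := by
  have := cocycle_eq_zero_of_finite_range (fun g => c g - (act g m - m)) (by
    intro g h k
    simp only [Finsupp.sub_apply, act_apply, hc, mul_inv_rev, mul_assoc]
    ring) (by
    refine (hfin.image fun x => m - x).subset ?_
    rintro _ ⟨g, rfl⟩
    exact ⟨_, ⟨g, rfl⟩, by simp only; abel⟩) g
  exact sub_eq_zero.1 this

/-- The character of `𝕋^G` attached to an element of `ℤG`. -/
def chi {G : Type} (m : G →₀ ℤ) (x : G → Circle) : Circle := m.prod fun h n => x h ^ n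

lemma chi_zero {G : Type} (x : G → Circle) : chi 0 x = 1 := by simp [chi]

lemma chi_add {G : Type} (m n : G →₀ ℤ) (x : G → Circle) :
    chi (m + n) x = chi m x * chi n x := by
  classical
  exact Finsupp.prod_add_index' (by simp) (fun a b c => zpow_add _ _ _)

lemma chi_neg {G : Type} (m : G →₀ ℤ) (x : G → Circle) : chi (-m) x = (chi m x)⁻¹ := by
  rw [eq_inv_iff_mul_eq_one, ← chi_add, neg_add_cancel, chi_zero]

lemma chi_sub {G : Type} (m n : G →₀ ℤ) (x : G → Circle) :
    chi (m - n) x = chi m x * (chi n x)⁻¹ := by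
  rw [sub_eq_add_neg, chi_add, chi_neg]

lemma chi_mul {G : Type} (m : G →₀ ℤ) (x y : G → Circle) :
    chi m (x * y) = chi m x * chi m y := by
  simp [chi, Finsupp.prod, mul_zpow, Finset.prod_mul_distrib]

lemma chi_continuous {G : Type} (m : G →₀ ℤ) : Continuous (chi m) := by
  unfold chi Finsupp.prod
  fun_prop

lemma chi_single {G : Type} (h : G) (n : ℤ) (x : G → Circle) :
    chi (Finsupp.single h n) x = x h ^ n := by
  simp [chi]

lemma chi_act {G : Type} [Group G] (g : G) (m : G →₀ ℤ) (x : G → Circle) :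
    chi (act g m) x = chi m (bernoulliShift G Circle g⁻¹ x) := by
  simp [chi, act, Finsupp.prod_equivMapDomain, bernoulliShift]

lemma chi_mulSingle {G : Type} [DecidableEq G] (m : G →₀ ℤ) (h : G) (z : Circle) :
    chi m (Pi.mulSingle h z) = z ^ m h := by
  unfold chi Finsupp.prod
  rw [Finset.prod_eq_single h]
  · simp
  · intro b _ hb
    simp [Pi.mulSingle_eq_of_ne hb]
  · intro hh
    simp [Finsupp.notMem_support_iff.1 hh]

/-- The character as a continuous complex-valued function. -/
def chiC {G : Type} (m : G →₀ ℤ) : C(G → Circle, ℂ) :=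
  ⟨fun x => (chi m x : ℂ), circle_cont.comp (chi_continuous m)⟩

/-- The star subalgebra generated by the characters. -/
def chiAlg (G : Type) : StarSubalgebra ℂ C(G → Circle, ℂ) where
  toSubalgebra := Algebra.adjoin ℂ (Set.range (chiC (G := G)))
  star_mem' := by
    change Algebra.adjoin ℂ (Set.range (chiC (G := G))) ≤
      star (Algebra.adjoin ℂ (Set.range (chiC (G := G))))
    refine Algebra.adjoin_le ?_
    rintro - ⟨n, rfl⟩
    refine Algebra.subset_adjoin ⟨-n, ContinuousMap.ext fun x => ?_⟩
    change ((chi (-n) x : Circle) : ℂ) = (starRingEnd ℂ) (chi n x : ℂ)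
    rw [chi_neg, Circle.coe_inv_eq_conj]

lemma chiAlg_coe (G : Type) :
    Subalgebra.toSubmodule (chiAlg G).toSubalgebra
      = Submodule.span ℂ (Set.range (chiC (G := G))) := by
  apply Algebra.adjoin_eq_span_of_subset
  refine Set.Subset.trans ?_ Submodule.subset_span
  intro x hx
  refine Submonoid.closure_induction (fun _ => id) ⟨0, ?_⟩ ?_ hx
  · ext1 z; simp [chiC, chi_zero]
  · rintro - - - - ⟨m, rfl⟩ ⟨n, rfl⟩
    refine ⟨m + n, ?_⟩
    ext1 z
    simp [chiC, chi_add]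

lemma chiAlg_sep (G : Type) : (chiAlg G).SeparatesPoints := by
  intro x y hxy
  obtain ⟨h, hh⟩ := Function.ne_iff.1 hxy
  refine ⟨_, ⟨chiC (Finsupp.single h 1), Algebra.subset_adjoin ⟨_, rfl⟩, rfl⟩, ?_⟩
  simpa [chiC, chi_single, Circle.ext_iff] using hh

lemma span_chiC (G : Type) :
    (Submodule.span ℂ (Set.range (chiC (G := G)))).topologicalClosure = ⊤ := by
  rw [← chiAlg_coe]
  exact congr_arg (Subalgebra.toSubmodule <| StarSubalgebra.toSubalgebra ·)
    (ContinuousMap.starSubalgebra_topologicalClosure_eq_top_of_separatesPoints (chiAlg G)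
      (chiAlg_sep G))

/-- The character as an element of `L²`. -/
def chiLp {G : Type} [Countable G] (μ : Measure (G → Circle)) [IsProbabilityMeasure μ]
    (m : G →₀ ℤ) : Lp ℂ 2 μ :=
  ContinuousMap.toLp (E := ℂ) 2 μ ℂ (chiC m)

lemma span_chiLp {G : Type} [Countable G] (μ : Measure (G → Circle)) [IsProbabilityMeasure μ] :
    (Submodule.span ℂ (Set.range (chiLp μ))).topologicalClosure = ⊤ := by
  convert!
    (ContinuousMap.toLp_denseRange ℂ μ ℂ (p := 2) (by simp)).topologicalClosure_map_submodule
      (span_chiC G)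
  rw [Submodule.map_span]
  unfold chiLp
  rw [Set.range_comp']
  simp only [ContinuousLinearMap.coe_coe]

lemma bern_eq {G : Type} (ν : Measure Circle) [IsProbabilityMeasure ν]
    (μ : Measure (G → Circle)) (hμ : IsBernoulliMeasure ν μ) :
    μ = Measure.infinitePi (fun _ => ν) := by
  refine Measure.eq_infinitePi _ fun s t ht => ?_
  exact hμ s t ht

lemma shift_mp {G : Type} [Group G] (ν : Measure Circle) [IsProbabilityMeasure ν]
    (μ : Measure (G → Circle)) (hμ : IsBernoulliMeasure ν μ) (g : G) :
    MeasurePreserving (bernoulliShift G Circle g) μ μ := by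
  have hm : Measurable (bernoulliShift G Circle g) := by
    unfold bernoulliShift; fun_prop
  refine ⟨hm, ?_⟩
  conv_rhs => rw [bern_eq ν μ hμ]
  refine Measure.eq_infinitePi _ fun s t ht => ?_
  rw [Measure.map_apply hm (MeasurableSet.pi s.countable_toSet fun i _ => ht i)]
  have := hμ (s.map (Equiv.mulLeft g⁻¹).toEmbedding) (fun i => t (g * i)) (fun i => ht _)
  rw [Finset.prod_map] at this
  simp only [Finset.mem_map] at this
  convert this using 2
  · ext x
    simp [bernoulliShift]
  · simp

lemma transl_mp {G : Type} [Countable G] (ν : Measure Circle) [IsProbabilityMeasure ν]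
    [ν.IsHaarMeasure]
    (μ : Measure (G → Circle)) (hμ : IsBernoulliMeasure ν μ) (y : G → Circle) :
    MeasurePreserving (fun x => x * y) μ μ := by
  have hm : Measurable (fun x : G → Circle => x * y) := (continuous_mul_const y).measurable
  refine ⟨hm, ?_⟩
  conv_rhs => rw [bern_eq ν μ hμ]
  refine Measure.eq_infinitePi _ fun s t ht => ?_
  rw [Measure.map_apply hm (MeasurableSet.pi s.countable_toSet fun i _ => ht i)]
  have := hμ s (fun i => (fun z => z * y i) ⁻¹' t i)
    (fun i => (measurable_mul_const (y i)) (ht i))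
  simp only [measure_preimage_mul_right] at this
  exact this

lemma integral_chi {G : Type} [Countable G] (ν : Measure Circle) [IsProbabilityMeasure ν]
    [ν.IsHaarMeasure]
    (μ : Measure (G → Circle)) (hμ : IsBernoulliMeasure ν μ) (m : G →₀ ℤ) (hm : m ≠ 0) :
    ∫ x, (chi m x : ℂ) ∂μ = 0 := by
  classical
  obtain ⟨h, hh⟩ : ∃ h, m h ≠ 0 := by
    by_contra! H
    exact hm (Finsupp.ext H)
  obtain ⟨z, hz⟩ : ∃ z : Circle, z ^ m h ≠ 1 := by
    refine ⟨Circle.exp (Real.pi / m h), ?_⟩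
    rw [← Circle.exp_zsmul]
    have : (m h : ℤ) • (Real.pi / m h) = Real.pi := by
      have : (m h : ℝ) ≠ 0 := by exact_mod_cast hh
      rw [zsmul_eq_mul]; field_simp
    rw [this]
    intro H
    have := congrArg (fun z : Circle => (z : ℂ)) H
    simp [Circle.coe_exp] at this
    norm_num at this
  set y : G → Circle := Pi.mulSingle h z
  have hmp := transl_mp ν μ hμ y
  have e : ∫ x, (chi m (x * y) : ℂ) ∂μ = ∫ x, (chi m x : ℂ) ∂μ :=
    hmp.integral_comp (MeasurableEquiv.mulRight y).measurableEmbedding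
      (fun x => (chi m x : ℂ))
  simp only [chi_mul, Circle.coe_mul, integral_mul_const] at e
  have hy : (chi m y : ℂ) ≠ 1 := by
    rw [chi_mulSingle]
    exact fun H => hz (Circle.ext (by simpa using H))
  by_contra hI
  exact hy (mul_left_cancel₀ hI (by rw [e, mul_one]))

lemma inner_chiLp {G : Type} [Countable G] (μ : Measure (G → Circle)) [IsProbabilityMeasure μ]
    (m : G →₀ ℤ) (f : (G → Circle) → ℂ) (hf : MemLp f 2 μ) :
    inner ℂ (chiLp μ m) hf.toLp = ∫ x, ((chi m x)⁻¹ : Circle) * f x ∂μ := by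
  rw [L2.inner_def]
  refine integral_congr_ae ?_
  filter_upwards [hf.coeFn_toLp, ContinuousMap.coeFn_toLp (p := 2) (𝕜 := ℂ) μ (chiC m)]
    with x h1 h2
  simp only [chiLp, h1, h2]
  rw [Circle.coe_inv_eq_conj]
  simp [chiC, mul_comm]

lemma chi_memLp {G : Type} [Countable G] (μ : Measure (G → Circle)) [IsProbabilityMeasure μ]
    (b : (G → Circle) → Circle) (hb : Measurable b) : MemLp (fun x => (b x : ℂ)) 2 μ := by
  refine MemLp.of_bound
    (circle_cont.measurable.comp hb).aestronglyMeasurable 1 (ae_of_all _ fun x => ?_)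
  exact (Circle.norm_coe (b x)).le

lemma chiLp_eq {G : Type} [Countable G] (μ : Measure (G → Circle)) [IsProbabilityMeasure μ]
    (m : G →₀ ℤ) :
    chiLp μ m = (chi_memLp μ (chi m) (chi_continuous m).measurable).toLp := by
  rfl

lemma orthonormal_chiLp {G : Type} [Countable G] (ν : Measure Circle) [IsProbabilityMeasure ν]
    [ν.IsHaarMeasure]
    (μ : Measure (G → Circle)) [IsProbabilityMeasure μ] (hμ : IsBernoulliMeasure ν μ) :
    Orthonormal ℂ (chiLp μ) := by
  classical
  rw [orthonormal_iff_ite]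
  intro m n
  conv_lhs => rw [chiLp_eq μ n]
  rw [inner_chiLp]
  have : ∀ x, (((chi m x)⁻¹ : Circle) : ℂ) * (chi n x : ℂ) = (chi (n - m) x : ℂ) := by
    intro x
    rw [chi_sub, Circle.coe_mul, mul_comm]
  simp only [this]
  split_ifs with h
  · subst h
    simp [chi_zero]
  · exact integral_chi ν μ hμ _ (sub_ne_zero.2 (Ne.symm h))

lemma main_coboundary {G : Type} [Group G] [Countable G] [Infinite G]
    (ν : Measure Circle) [IsProbabilityMeasure ν] [ν.IsHaarMeasure]
    (μ : Measure (G → Circle)) [IsProbabilityMeasure μ] (hμ : IsBernoulliMeasure ν μ)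
    (hsurj : IsCocycleSuperrigid (bernoulliShift G Circle) μ)
    (c : G → G →₀ ℤ) (hc : ∀ g h k, c (g * h) k = c h (g⁻¹ * k) + c g k) :
    ∃ m, ∀ g, c g = act g m - m := by
  have hc' : ∀ g h, c (g * h) = act g (c h) + c g := by
    intro g h; ext k; simp [hc, act_apply]
  obtain ⟨lam, b, hb, hlb⟩ := hsurj (fun g x => chi (c g) x)
    ⟨fun g => (chi_continuous _).measurable, fun g h => ae_of_all _ fun x => by
      simp only [hc', chi_add, chi_act, mul_comm]⟩
  set B := (chi_memLp μ b hb).toLp with hB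
  have hon := orthonormal_chiLp ν μ hμ
  -- a nonzero coefficient
  obtain ⟨m, hm⟩ : ∃ m, inner ℂ (chiLp μ m) B ≠ 0 := by
    by_contra! H
    have hB0 : B = 0 := by
      have h0 : B ∈ (Submodule.span ℂ (Set.range (chiLp μ)))ᗮ := by
        rw [Submodule.mem_orthogonal]
        intro u hu
        induction hu using Submodule.span_induction with
        | mem x hx => obtain ⟨m, rfl⟩ := hx; exact H m
        | zero => simp
        | add x y _ _ hx hy => rw [inner_add_left, hx, hy, add_zero]
        | smul a x _ hx => rw [inner_smul_left, hx, mul_zero]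
      rw [Submodule.topologicalClosure_eq_top_iff.1 (span_chiLp μ)] at h0
      simpa using h0
    have h1 : (B : (G → Circle) → ℂ) =ᵐ[μ] 0 := by
      rw [hB0]; exact Lp.coeFn_zero _ _ _
    have h2 : ∀ᵐ x ∂μ, False := by
      filter_upwards [h1, (chi_memLp μ b hb).coeFn_toLp] with x e1 e2
      rw [← hB, e1] at e2
      exact Circle.coe_ne_zero (b x) e2.symm
    simp at h2
    exact IsProbabilityMeasure.ne_zero μ h2
  refine ⟨m, coboundary_of_finite c hc m ?_⟩
  have key : ∀ g, ‖inner ℂ (chiLp μ (act g m - c g)) B‖ = ‖inner ℂ (chiLp μ m) B‖ := by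
    intro g
    have hmp := shift_mp ν μ hμ g⁻¹
    have e : inner ℂ (chiLp μ (act g m - c g)) B = (lam g : ℂ) * inner ℂ (chiLp μ m) B := by
      rw [hB, inner_chiLp, inner_chiLp, ← integral_const_mul]
      conv_rhs => rw [← hmp.map_eq]
      rw [integral_map hmp.measurable.aemeasurable]
      · refine integral_congr_ae ?_
        filter_upwards [hlb g] with x hx
        rw [chi_sub, chi_act, hx]
        norm_cast
        simp only [mul_inv_rev, inv_inv]
        generalize b (bernoulliShift G Circle g⁻¹ x) = u
        generalize chi m (bernoulliShift G Circle g⁻¹ x) = v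
        rw [show lam g * (u * (b x)⁻¹) * v⁻¹ * b x = lam g * (v⁻¹ * u) * ((b x)⁻¹ * b x) by
          ac_rfl]
        simp
      · refine Measurable.aestronglyMeasurable ?_
        refine Measurable.const_mul (Measurable.mul ?_ ?_) _
        · exact circle_cont.measurable.comp (chi_continuous m).measurable.inv
        · exact circle_cont.measurable.comp hb
    rw [e, norm_mul, Circle.norm_coe, one_mul]
  have hsum := hon.inner_products_summable B
  have hpos : 0 < ‖inner ℂ (chiLp μ m) B‖ ^ 2 := by positivity
  have hfin := (hsum.tendsto_cofinite_zero.eventually (gt_mem_nhds hpos))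
  rw [Filter.eventually_cofinite] at hfin
  refine hfin.subset ?_
  rintro _ ⟨g, rfl⟩
  simp [key g]

end Proof

/-- Let `G ∈ 𝒢` be countable infinite and consider the Bernoulli
shift `G ↷ (𝕋^G, ν^G)` where `ν` is the Haar probability measure on `𝕋`.  If the
natural map `Ψ₁ : H¹(G, 𝕋) → H¹(G ↷ 𝕋^G; 𝕋)` is surjective — equivalently, every
measurable 1-cocycle is cohomologous to a homomorphism, i.e. the shift is `𝕋`-cocycle
superrigid — then `H¹(G, ℤG) = 0`. -/
theorem h1_zg_trivial_of_psi1_surjective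
    (G : Type) [Group G] [Countable G] [Infinite G] (hG : InClassG G)
    (ν : Measure Circle) [IsProbabilityMeasure ν] [ν.IsHaarMeasure]
    (μ : Measure (G → Circle)) [IsProbabilityMeasure μ] (hμ : IsBernoulliMeasure ν μ)
    (hsurj : IsCocycleSuperrigid (bernoulliShift G Circle) μ) :
    ∀ x : groupCohomology.H1 (Rep.ofMulAction ℤ G G), x = 0 := by
  intro x
  induction x using groupCohomology.H1_induction_on with
  | h f =>
    rw [groupCohomology.H1π_eq_zero_iff]
    have hf := (groupCohomology.mem_cocycles₁_iff (f : G → Rep.ofMulAction ℤ G G)).1 f.2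
    obtain ⟨m, hm⟩ := main_coboundary ν μ hμ hsurj
      (fun g => MonoidAlgebra.coeff (f g)) (by
        intro g h k
        have := congrArg (fun v : MonoidAlgebra ℤ G => v.coeff k) (hf g h)
        simp only at this
        refine this.trans ?_
        rw [MonoidAlgebra.coeff_add, Finsupp.add_apply]
        congr 1
        exact Representation.coeff_ofMulAction g _ k)
    refine ⟨MonoidAlgebra.ofCoeff m, ?_⟩
    funext g
    refine MonoidAlgebra.coeff_injective (Finsupp.ext fun k => ?_)
    have h1 := DFunLike.congr_fun (hm g) k
    refine Eq.trans ?_ h1.symm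
    rw [Finsupp.sub_apply, act_apply, groupCohomology.d₀₁_hom_apply]
    exact congrArg₂ (fun a b : ℤ => a - b) (Representation.coeff_ofMulAction g _ k) rfl

end AlgActCohomology
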